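/- Let G be a finite simple cubic graph that is 3-edge-connected, and let e and f be two distinct adjacent edges of G (edges sharing an endpoint). Then G admits a nowhere-zero Z_2^3-flow θ such that both e and f are rich with respect to θ. -/

import Mathlib

open SimpleGraph

/-- A proper edge-coloring: distinct edges of `G` sharing an endpoint get different colors. -/
def IsProperEdgeColoring {V C : Type*} (G : SimpleGraph V) (c : Sym2 V → C) : Prop :=
  ∀ e ∈ G.edgeSet, ∀ f ∈ G.edgeSet, e ≠ f → (∃ v : V, v ∈ e ∧ v ∈ f) → c e ≠ c f

/-- `S_c(v)`: the set of colors appearing on edges incident to `v`. -/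
def colorSet {V C : Type*} (G : SimpleGraph V) (c : Sym2 V → C) (v : V) : Set C :=
  c '' G.incidenceSet v

/-- The edge `uv` is poor: exactly 3 colors appear around its endpoints. -/
def IsPoorAt {V C : Type*} (G : SimpleGraph V) (c : Sym2 V → C) (u v : V) : Prop :=
  (colorSet G c u ∪ colorSet G c v).ncard = 3

/-- The edge `uv` is rich: exactly 5 colors appear around its endpoints. -/
def IsRichAt {V C : Type*} (G : SimpleGraph V) (c : Sym2 V → C) (u v : V) : Prop :=
  (colorSet G c u ∪ colorSet G c v).ncard = 5

/-- A normal edge-coloring: a proper edge-coloring in which every edge is poor or rich. -/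
def IsNormalEdgeColoring {V C : Type*} (G : SimpleGraph V) (c : Sym2 V → C) : Prop :=
  IsProperEdgeColoring G c ∧
    ∀ u v : V, G.Adj u v → IsPoorAt G c u v ∨ IsRichAt G c u v

/-- A nowhere-zero flow with values in an additive group `M` (all elements self-inverse in our
applications): nonzero on every edge, and at every vertex the values on incident edges sum to 0. -/
def IsNowhereZeroFlow {V M : Type*} [AddCommMonoid M] (G : SimpleGraph V)
    (θ : Sym2 V → M) : Prop :=
  (∀ e ∈ G.edgeSet, θ e ≠ 0) ∧ ∀ v : V, ∑ᶠ e ∈ G.incidenceSet v, θ e = 0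

/-- `G` is `k`-edge-connected: connected, and still connected after deleting any set of
fewer than `k` edges. -/
def EdgeConnGe {V : Type*} (G : SimpleGraph V) (k : ℕ) : Prop :=
  G.Connected ∧ ∀ s : Set (Sym2 V), s.ncard < k → (G.deleteEdges s).Connected

/-- `G` is cubic: every vertex has degree 3. -/
def IsCubic {V : Type*} (G : SimpleGraph V) : Prop :=
  ∀ v : V, (G.neighborSet v).ncard = 3

/-- `G` is bridgeless: no edge is a bridge. -/
def Bridgeless {V : Type*} (G : SimpleGraph V) : Prop :=
  ∀ e ∈ G.edgeSet, ¬ G.IsBridge e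

/-!
The flow is found as a pair `θ = (c, ψ)`, where `c` is a binary flow that vanishes at `v` but
neither at `u` nor at `w`, and `ψ` is a flow with values in `M` (here `ZMod 2 × ZMod 2`) that is
nonzero on the zeros of `c`. At `u` the edge `uv` is then the only one with first coordinate `0`, so
the color sets at `u` and `v`, of size three each, share only the color of `uv`; the same holds for
`w`.

The pair is constructed as in Seymour's 6-flow theorem, by growing a connected subgraph `S` along
with `c`. To `S` one adds either a missing edge or a connected even subgraph `P` disjoint from `S`
together with two edges joining it to `S`; in the second case the edges of `P` are added to the
support of `c`. At most two new edges remain zeros of `c`, and they lie on a common closed walk `Q`: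
since `M` has a third element `γ` besides two forbidden ones, adding `Q • γ` to `ψ` serves both.
Because `P` avoids `S`, the values of `c` at the vertices of `S` never change again.

The subgraphs `P` come from minimal subgraphs in which two vertices are not separated by a single
edge: uncrossing cuts of size two shows that all degrees of such a subgraph are even. The first one
links `u` to `w` in `G - v`; the later ones lie in a leaf of the bridge tree of `G - S`, which sends
at least two edges to `S` because `G` is 3-edge-connected.
-/

section EdgeCount

variable {V : Type*} {G : SimpleGraph V}

/-- The number `e_H(A, B)` of edges of a subgraph `H` leading from `A` to `B`. Edges are counted as
ordered pairs, so an edge with both ends in `A ∩ B` counts twice; `edgeCount H A Aᶜ` is the size of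
the edge cut around `A`, and `edgeCount H {z} Set.univ` is the degree of `z`. -/
noncomputable def edgeCount (H : G.Subgraph) (A B : Set V) : ℕ :=
  {p : V × V | p.1 ∈ A ∧ p.2 ∈ B ∧ H.Adj p.1 p.2}.ncard

lemma edgeCount_comm (H : G.Subgraph) (A B : Set V) : edgeCount H A B = edgeCount H B A := by
  rw [edgeCount, edgeCount, ← Set.ncard_image_of_injective _ Prod.swap_injective,
    Set.image_swap_eq_preimage_swap]
  congr 1
  ext p
  simp only [Set.mem_preimage, Set.mem_ofPred_eq, Prod.fst_swap, Prod.snd_swap, H.adj_comm p.2]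
  tauto

lemma edgeCount_compl_comm (H : G.Subgraph) (A : Set V) :
    edgeCount H Aᶜ Aᶜᶜ = edgeCount H A Aᶜ := by
  rw [compl_compl, edgeCount_comm]

lemma edgeCount_singleton_univ (H : G.Subgraph) (z : V) :
    edgeCount H {z} Set.univ = (H.neighborSet z).ncard := by
  rw [← Set.ncard_image_of_injective _ (Prod.mk_right_injective z), edgeCount]
  congr 1
  ext ⟨x, y⟩
  simp only [Set.mem_singleton_iff, Set.mem_univ, true_and, Set.mem_ofPred_eq, Set.mem_image,
    Subgraph.mem_neighborSet, Prod.mk.injEq, exists_eq_right_right]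
  grind

lemma edgeCount_induce (H : G.Subgraph) (Z A B : Set V) :
    edgeCount (H.induce Z) A B = edgeCount H (A ∩ Z) (B ∩ Z) := by
  unfold edgeCount
  congr 1
  ext p
  simp only [Subgraph.induce_adj, Set.mem_ofPred_eq, Set.mem_inter_iff]
  tauto

open scoped Classical in
lemma edgeCount_eq_sum [Fintype V] (H : G.Subgraph) (A B : Set V) :
    edgeCount H A B = ∑ p : V × V, if p.1 ∈ A ∧ p.2 ∈ B ∧ H.Adj p.1 p.2 then 1 else 0 := by
  rw [edgeCount, Set.ncard_eq_toFinset_card', ← Finset.card_filter]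
  congr 1
  ext p
  simp

variable [Finite V]

lemma edgeCount_pos {H : G.Subgraph} {A B : Set V} :
    0 < edgeCount H A B ↔ ∃ a ∈ A, ∃ b ∈ B, H.Adj a b := by
  rw [edgeCount, Set.ncard_pos]
  exact ⟨fun ⟨⟨a, b⟩, ha, hb, hab⟩ => ⟨a, ha, b, hb, hab⟩,
    fun ⟨a, ha, b, hb, hab⟩ => ⟨(a, b), ha, hb, hab⟩⟩

lemma edgeCount_le_edgeCount {H K : G.Subgraph} {A B C D : Set V}
    (h : ∀ a ∈ A, ∀ b ∈ B, H.Adj a b → a ∈ C ∧ b ∈ D ∧ K.Adj a b) :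
    edgeCount H A B ≤ edgeCount K C D :=
  Set.ncard_le_ncard fun _ hp => h _ hp.1 _ hp.2.1 hp.2.2

lemma edgeCount_union_right (H : G.Subgraph) (A : Set V) {B C : Set V} (h : Disjoint B C) :
    edgeCount H A (B ∪ C) = edgeCount H A B + edgeCount H A C := by
  unfold edgeCount
  rw [← Set.ncard_union_eq]
  · congr 1
    ext p
    simp only [Set.mem_ofPred_eq, Set.mem_union]
    tauto
  · exact Set.disjoint_left.2 fun p hB hC => Set.disjoint_left.1 h hB.2.1 hC.2.1

lemma edgeCount_union_left (H : G.Subgraph) {A B : Set V} (C : Set V) (h : Disjoint A B) :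
    edgeCount H (A ∪ B) C = edgeCount H A C + edgeCount H B C := by
  rw [edgeCount_comm, edgeCount_union_right H C h, edgeCount_comm H C, edgeCount_comm H C]

lemma edgeCount_add_edgeCount_compl (H : G.Subgraph) (A B : Set V) :
    edgeCount H A B + edgeCount H A Bᶜ = edgeCount H A Set.univ := by
  rw [← edgeCount_union_right H A disjoint_compl_right, Set.union_compl_self]

lemma edgeCount_inter_add_edgeCount_union (H : G.Subgraph) (A B : Set V) :
    edgeCount H (A ∩ B) (A ∩ B)ᶜ + edgeCount H (A ∪ B) (A ∪ B)ᶜ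
        + 2 * edgeCount H (A \ B) (B \ A) =
      edgeCount H A Aᶜ + edgeCount H B Bᶜ := by
  classical
  cases nonempty_fintype V
  rw [two_mul]
  nth_rewrite 2 [edgeCount_comm H (A \ B)]
  simp only [edgeCount_eq_sum, ← Finset.sum_add_distrib]
  refine Finset.sum_congr rfl fun p _ => ?_
  simp only [Set.mem_union, Set.mem_inter_iff, Set.mem_compl_iff, Set.mem_sdiff]
  by_cases hA₁ : p.1 ∈ A <;> by_cases hB₁ : p.1 ∈ B <;> by_cases hA₂ : p.2 ∈ A <;>
    by_cases hB₂ : p.2 ∈ B <;> simp [hA₁, hB₁, hA₂, hB₂]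

lemma edgeCount_sdiff_singleton (H : G.Subgraph) {A : Set V} {z : V} (hz : z ∈ A) :
    edgeCount H (A \ {z}) (A \ {z})ᶜ + edgeCount H {z} Aᶜ =
      edgeCount H A Aᶜ + edgeCount H {z} A := by
  classical
  cases nonempty_fintype V
  rw [edgeCount_comm H {z} A]
  simp only [edgeCount_eq_sum, ← Finset.sum_add_distrib]
  refine Finset.sum_congr rfl fun p _ => ?_
  have hloop : ¬ H.Adj z z := fun h => h.ne rfl
  simp only [Set.mem_sdiff, Set.mem_singleton_iff, Set.mem_compl_iff]
  grind

lemma edgeCount_le_edgeCount_deleteEdges_add_one (H : G.Subgraph) (A : Set V) (a b : V) :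
    edgeCount H A Aᶜ ≤ edgeCount (H.deleteEdges {s(a, b)}) A Aᶜ + 1 := by
  classical
  unfold edgeCount
  rw [← Set.ncard_singleton (if a ∈ A then (a, b) else (b, a))]
  refine (Set.ncard_le_ncard ?_).trans (Set.ncard_union_le _ _)
  rintro ⟨x, y⟩ ⟨hx, hy, hxy⟩
  simp only [Set.mem_compl_iff, Subgraph.deleteEdges_adj, Set.mem_union, Set.mem_ofPred_eq,
    Set.mem_singleton_iff, Sym2.eq_iff] at *
  grind

lemma EdgeConnGe.le_edgeCount {k : ℕ} (hG : EdgeConnGe G k) {A : Set V} (hA : A.Nonempty)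
    (hAc : Aᶜ.Nonempty) : k ≤ edgeCount (⊤ : G.Subgraph) A Aᶜ := by
  obtain ⟨⟨a, ha⟩, ⟨b, hb⟩⟩ := hA, hAc
  by_contra! hlt
  obtain ⟨p⟩ := (hG.2 _ ((Set.ncard_image_le (f := fun p : V × V => s(p.1, p.2))).trans_lt hlt))
    |>.preconnected a b
  obtain ⟨d, -, hdA, hdAc⟩ := p.exists_boundary_dart A ha hb
  have hd := deleteEdges_adj.1 d.adj
  exact hd.2 ⟨(d.fst, d.snd), ⟨hdA, hdAc, hd.1⟩, rfl⟩

end EdgeCount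

section TwoLinked

variable {V : Type*} {G : SimpleGraph V} {H K : G.Subgraph} {x y z : V} {A B : Set V}

/-- Every edge cut of `H` separating `x` from `y` has at least two edges. By Menger's theorem this
says that two edge-disjoint paths of `H` join `x` to `y`. -/
def IsTwoLinked (H : G.Subgraph) (x y : V) : Prop :=
  ∀ A : Set V, x ∈ A → y ∉ A → 2 ≤ edgeCount H A Aᶜ

lemma IsTwoLinked.symm (h : IsTwoLinked H x y) : IsTwoLinked H y x := fun A hy hx =>
  edgeCount_compl_comm H A ▸ h Aᶜ hx (not_not.2 hy)

/-- The edge cut around `A` separates `x` from `y` and has exactly two edges. -/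
structure IsTight (K : G.Subgraph) (x y : V) (A : Set V) : Prop where
  mem : x ∈ A
  notMem : y ∉ A
  edgeCount_eq : edgeCount K A Aᶜ = 2

lemma IsTight.compl (h : IsTight K x y A) : IsTight K y x Aᶜ :=
  ⟨h.notMem, not_not.2 h.mem, (edgeCount_compl_comm K A).trans h.edgeCount_eq⟩

/-- A subgraph minimal among those that link `x` to `y` twice. -/
def IsMinimalLink (K : G.Subgraph) (x y : V) : Prop :=
  Minimal (IsTwoLinked · x y) K

/-- Every vertex has even degree, i.e. the edge set is an element of the binary cycle space. -/
def IsEvenSubgraph (K : G.Subgraph) : Prop :=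
  ∀ z, Even (K.neighborSet z).ncard

lemma isEvenSubgraph_singletonSubgraph (v : V) : IsEvenSubgraph (G.singletonSubgraph v) :=
  fun _ => by simp [Subgraph.neighborSet]

lemma IsMinimalLink.symm (hK : IsMinimalLink K x y) : IsMinimalLink K y x :=
  ⟨hK.prop.symm, fun _ hL hLK => hK.2 hL.symm hLK⟩

variable [Finite V]

lemma IsTwoLinked.exists_adj_left (h : IsTwoLinked H x y) (hxy : x ≠ y) : ∃ b, H.Adj x b := by
  obtain ⟨_, rfl, b, -, hb⟩ := edgeCount_pos.1 (zero_lt_two.trans_le (h {x} rfl hxy.symm))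
  exact ⟨b, hb⟩

lemma IsTight.edgeCount_inter_and_sdiff (hK : IsTwoLinked K x y) (hA : IsTight K x y A)
    (hB : IsTight K x y B) :
    edgeCount K (A ∩ B) (A ∩ B)ᶜ = 2 ∧ edgeCount K (A \ B) (B \ A) = 0 := by
  have huncross := edgeCount_inter_add_edgeCount_union K A B
  have hinter := hK (A ∩ B) ⟨hA.mem, hB.mem⟩ fun h => hA.notMem h.1
  have hunion := hK (A ∪ B) (.inl hA.mem) (by simp [hA.notMem, hB.notMem])
  rw [hA.edgeCount_eq, hB.edgeCount_eq] at huncross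
  lia

lemma IsTight.inter (hK : IsTwoLinked K x y) (hA : IsTight K x y A) (hB : IsTight K x y B) :
    IsTight K x y (A ∩ B) :=
  ⟨⟨hA.mem, hB.mem⟩, fun h => hA.notMem h.1, (hA.edgeCount_inter_and_sdiff hK hB).1⟩

lemma IsTight.not_adj (hK : IsTwoLinked K x y) (hA : IsTight K x y A) (hB : IsTight K x y B)
    {a b : V} (ha : a ∈ A \ B) (hb : b ∈ B \ A) : ¬ K.Adj a b := fun hab =>
  (edgeCount_pos.2 ⟨a, ha, b, hb, hab⟩).ne' (hA.edgeCount_inter_and_sdiff hK hB).2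

lemma IsTight.exists_isLeast (hK : IsTwoLinked K x y) (hA : IsTight K x y A) (hz : z ∈ A) :
    ∃ L, IsLeast {B | IsTight K x y B ∧ z ∈ B} L := by
  obtain ⟨L, -, hL, hLmin⟩ :=
    exists_minimal_le_of_wellFoundedLT (fun B => IsTight K x y B ∧ z ∈ B) A ⟨hA, hz⟩
  refine ⟨L, hL, fun B hB => ?_⟩
  exact (hLmin ⟨hL.1.inter hK hB.1, hL.2, hB.2⟩ Set.inter_subset_left).trans
    Set.inter_subset_right

lemma IsTight.edgeCount_compl_le (hK : IsTwoLinked K x y) (hA : IsTight K x y A) (hz : z ∈ A)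
    (hzx : z ≠ x) : edgeCount K {z} Aᶜ ≤ edgeCount K {z} A := by
  have herase := edgeCount_sdiff_singleton K hz
  have hcut := hK (A \ {z}) ⟨hA.mem, hzx.symm⟩ fun h => hA.notMem h.1
  rw [hA.edgeCount_eq] at herase
  lia

namespace IsMinimalLink

lemma exists_isTight (hK : IsMinimalLink K x y) {a b : V} (hab : K.Adj a b) :
    ∃ A, a ∈ A ∧ b ∉ A ∧ (IsTight K x y A ∨ IsTight K y x A) := by
  have hdel : ¬ IsTwoLinked (K.deleteEdges {s(a, b)}) x y := fun h => by
    have hle := hK.2 h (Subgraph.deleteEdges_le _)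
    simpa using hle.2 hab
  simp only [IsTwoLinked, not_forall, not_le] at hdel
  obtain ⟨A, hx, hy, hlt⟩ := hdel
  have hge := hK.prop A hx hy
  have hle := edgeCount_le_edgeCount_deleteEdges_add_one K A a b
  have htight : IsTight K x y A := ⟨hx, hy, by lia⟩
  by_cases hcross : a ∈ A ↔ b ∈ A
  · have hsame : edgeCount K A Aᶜ ≤ edgeCount (K.deleteEdges {s(a, b)}) A Aᶜ :=
      edgeCount_le_edgeCount fun c hc d hd hcd => ⟨hc, hd, by
        simp only [Subgraph.deleteEdges_adj, hcd, Set.mem_singleton_iff, Sym2.eq_iff, true_and]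
        grind⟩
    lia
  · by_cases ha : a ∈ A
    · exact ⟨A, ha, fun hb => hcross (iff_of_true ha hb), .inl htight⟩
    · exact ⟨Aᶜ, ha, fun hb => hcross (iff_of_false ha hb), .inr htight.compl⟩

lemma ncard_neighborSet_left (hK : IsMinimalLink K x y) (hxy : x ≠ y) :
    (K.neighborSet x).ncard = 2 := by
  have htight : ∀ {b}, K.Adj x b → ∃ A, (IsTight K x y A ∧ x ∈ A) ∧ b ∉ A := fun hb => by
    obtain ⟨A, hx, hbA, hA | hA⟩ := hK.exists_isTight hb
    · exact ⟨A, ⟨hA, hx⟩, hbA⟩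
    · exact absurd hx hA.notMem
  obtain ⟨b, hb⟩ := hK.prop.exists_adj_left hxy
  obtain ⟨A, ⟨hA, hx⟩, -⟩ := htight hb
  obtain ⟨L, ⟨hL, hxL⟩, hleast⟩ := hA.exists_isLeast hK.prop hx
  rw [← edgeCount_singleton_univ]
  apply le_antisymm
  · rw [← hL.edgeCount_eq]
    refine edgeCount_le_edgeCount ?_
    rintro _ rfl c - hc
    obtain ⟨B, hB, hcB⟩ := htight hc
    exact ⟨hxL, fun hcL => hcB (hleast hB hcL), hc⟩
  · exact (hK.prop {x} rfl hxy.symm).trans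
      (edgeCount_le_edgeCount fun _ ha _ _ h => ⟨ha, trivial, h⟩)

lemma isTight_singleton (hK : IsMinimalLink K x y) (hxy : x ≠ y) : IsTight K x y {x} := by
  refine ⟨rfl, hxy.symm, ?_⟩
  rw [← hK.ncard_neighborSet_left hxy, ← edgeCount_singleton_univ]
  refine le_antisymm (edgeCount_le_edgeCount fun _ ha _ _ h => ⟨ha, trivial, h⟩)
    (edgeCount_le_edgeCount fun a ha b _ h => ⟨ha, ?_, h⟩)
  rintro rfl
  exact h.ne ha

/-- Let `A` be the least tight set around `x` containing `z`, and `C` the least one around `y`. All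
neighbours of `z` lie in exactly one of `A` and `C`, and moving `z` out of `A` or out of `C` cannot
decrease the cut, so half of the neighbours lie in `A` and half in `C`. -/
lemma even_ncard_neighborSet_of_ne (hK : IsMinimalLink K x y) (hxy : x ≠ y) (hzx : z ≠ x)
    (hzy : z ≠ y) : Even (K.neighborSet z).ncard := by
  obtain ⟨A, ⟨hA, hzA⟩, hAleast⟩ :=
    (hK.symm.isTight_singleton hxy.symm).compl.exists_isLeast hK.prop hzy
  obtain ⟨C, ⟨hC, hzC⟩, hCleast⟩ :=
    (hK.isTight_singleton hxy).compl.exists_isLeast hK.symm.prop hzx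
  have hiff : ∀ {b}, K.Adj z b → (b ∈ A ↔ b ∉ C) := fun {b} hb => by
    refine ⟨fun hbA hbC => ?_, fun hbC => by_contra fun hbA => ?_⟩
    · obtain ⟨B, hzB, hbB, hB | hB⟩ := hK.exists_isTight hb
      · exact hbB (hAleast ⟨hB, hzB⟩ hbA)
      · exact hbB (hCleast ⟨hB, hzB⟩ hbC)
    · exact hA.not_adj hK.prop hC.compl ⟨hzA, not_not.2 hzC⟩ ⟨hbC, hbA⟩ hb
  have hAC : edgeCount K {z} A ≤ edgeCount K {z} Cᶜ := edgeCount_le_edgeCount <| by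
    rintro _ rfl b hbA hb
    exact ⟨rfl, (hiff hb).1 hbA, hb⟩
  have hCA : edgeCount K {z} C ≤ edgeCount K {z} Aᶜ := edgeCount_le_edgeCount <| by
    rintro _ rfl b hbC hb
    exact ⟨rfl, fun hbA => (hiff hb).1 hbA hbC, hb⟩
  have hA_le := hA.edgeCount_compl_le hK.prop hzA hzx
  have hC_le := hC.edgeCount_compl_le hK.symm.prop hzC hzy
  rw [← edgeCount_singleton_univ, ← edgeCount_add_edgeCount_compl K {z} A]
  exact ⟨edgeCount K {z} A, by lia⟩

lemma isEvenSubgraph (hK : IsMinimalLink K x y) (hxy : x ≠ y) : IsEvenSubgraph K := fun z => by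
  rcases eq_or_ne z x with rfl | hzx
  · exact hK.ncard_neighborSet_left hxy ▸ even_two
  rcases eq_or_ne z y with rfl | hzy
  · exact hK.symm.ncard_neighborSet_left hxy.symm ▸ even_two
  exact hK.even_ncard_neighborSet_of_ne hxy hzx hzy

lemma connected (hK : IsMinimalLink K x y) (hxy : x ≠ y) : K.Connected := by
  let C : Set V := {z | ∃ p : G.Walk x z, p.toSubgraph ≤ K}
  obtain ⟨b, hb⟩ := hK.prop.exists_adj_left hxy
  have hxC : x ∈ C := ⟨.nil, by simpa using hb.fst_mem⟩
  have hC_closed : ∀ {a b}, a ∈ C → K.Adj a b → b ∈ C := by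
    rintro a b ⟨p, hp⟩ hab
    refine ⟨p.append (.cons hab.adj_sub .nil), ?_⟩
    simpa [Walk.toSubgraph_append, hp, hab.snd_mem] using hab
  have hlinked : IsTwoLinked (K.induce C) x y := fun A hx hy => by
    rw [edgeCount_induce]
    refine (hK.prop (A ∩ C) ⟨hx, hxC⟩ fun h => hy h.1).trans (edgeCount_le_edgeCount ?_)
    rintro a ⟨haA, haC⟩ b hb hab
    have hbC := hC_closed haC hab
    exact ⟨⟨haA, haC⟩, ⟨fun hbA => hb ⟨hbA, hbC⟩, hbC⟩, hab⟩
  have hvertsC : K.verts ⊆ C := (hK.2 hlinked ?_).1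
  · rw [Subgraph.connected_iff_forall_exists_walk_subgraph]
    refine ⟨⟨x, hb.fst_mem⟩, fun {a b} ha hb => ?_⟩
    obtain ⟨⟨p, hp⟩, q, hq⟩ := hvertsC ha, hvertsC hb
    exact ⟨p.reverse.append q, by simp [Walk.toSubgraph_append, hp, hq]⟩
  · refine ⟨?_, fun a b h => h.2.2⟩
    rintro a ⟨p, hp⟩
    exact hp.1 (by simp)

end IsMinimalLink

lemma IsTwoLinked.exists_connected_even (hH : IsTwoLinked H x y) (hxy : x ≠ y) :
    ∃ K ≤ H, K.Connected ∧ IsEvenSubgraph K ∧ (∃ a, K.Adj x a) ∧ ∃ b, K.Adj y b := by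
  obtain ⟨K, hKH, hK⟩ := exists_minimal_le_of_wellFoundedLT (IsTwoLinked · x y) H hH
  have hK : IsMinimalLink K x y := hK
  exact ⟨K, hKH, hK.connected hxy, hK.isEvenSubgraph hxy, hK.prop.exists_adj_left hxy,
    hK.symm.prop.exists_adj_left hxy.symm⟩

end TwoLinked

section Chain

variable {V M N : Type*} {E F : Set (Sym2 V)} {G : SimpleGraph V}

/-- The sum of `θ` over the pairs containing `x`. This is the boundary of a chain with coefficients
in a group of exponent two, where orientations are irrelevant. -/
noncomputable def boundary [AddCommMonoid M] (θ : Sym2 V → M) (x : V) : M :=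
  ∑ᶠ y, θ s(x, y)

/-- `θ` is a chain on the edge set `E` with boundary `D`. -/
structure IsChainOn [AddCommMonoid M] (E : Set (Sym2 V)) (θ : Sym2 V → M) (D : V → M) : Prop where
  eq_zero_of_notMem : ∀ {e}, e ∉ E → θ e = 0
  boundary_eq : boundary θ = D

/-- `θ` is a flow on the edge set `E`, possibly with zeros. -/
abbrev IsFlowOn [AddCommMonoid M] (E : Set (Sym2 V)) (θ : Sym2 V → M) : Prop :=
  IsChainOn E θ 0

/-- The boundary of a path from `a` to `b` with coefficients in `ZMod 2`. -/
noncomputable def endpoints (a b : V) : V → ZMod 2 :=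
  Set.indicator {a} 1 + Set.indicator {b} 1

lemma endpoints_self (a : V) : endpoints a a = 0 := ZModModule.add_self _

lemma endpoints_add_endpoints (a b c : V) : endpoints a b + endpoints b c = endpoints a c := by
  rw [endpoints, endpoints, endpoints, add_add_add_comm, ← add_assoc, add_assoc,
    ZModModule.add_add_add_cancel]

lemma IsChainOn.mono [AddCommMonoid M] {θ : Sym2 V → M} {D : V → M} (h : IsChainOn E θ D)
    (hEF : E ⊆ F) : IsChainOn F θ D :=
  ⟨fun he => h.eq_zero_of_notMem fun heE => he (hEF heE), h.boundary_eq⟩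

variable [Finite V]

lemma IsChainOn.add [AddCommMonoid M] {θ η : Sym2 V → M} {D D' : V → M} (hθ : IsChainOn E θ D)
    (hη : IsChainOn E η D') : IsChainOn E (θ + η) (D + D') where
  eq_zero_of_notMem he := by
    rw [Pi.add_apply, hθ.eq_zero_of_notMem he, hη.eq_zero_of_notMem he, add_zero]
  boundary_eq := by
    rw [← hθ.boundary_eq, ← hη.boundary_eq]
    exact funext fun x => finsum_add_distrib (Set.toFinite _) (Set.toFinite _)

lemma IsFlowOn.add [AddCommMonoid M] {θ η : Sym2 V → M} (hθ : IsFlowOn E θ) (hη : IsFlowOn E η) :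
    IsFlowOn E (θ + η) := by
  simpa only [add_zero] using IsChainOn.add hθ hη

lemma IsFlowOn.smul_const {R : Type*} [Semiring R] [AddCommMonoid M] [Module R M]
    {θ : Sym2 V → R} (hθ : IsFlowOn E θ) (γ : M) : IsFlowOn E fun e => θ e • γ where
  eq_zero_of_notMem he := by rw [hθ.eq_zero_of_notMem he, zero_smul]
  boundary_eq := funext fun x => by
    rw [boundary, ← finsum_smul' (Set.toFinite _), ← boundary, hθ.boundary_eq, Pi.zero_apply,
      zero_smul, Pi.zero_apply]

lemma IsFlowOn.prodMk [AddCommMonoid M] [AddCommMonoid N] {θ : Sym2 V → M} {η : Sym2 V → N}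
    (hθ : IsFlowOn E θ) (hη : IsFlowOn E η) : IsFlowOn E fun e => (θ e, η e) where
  eq_zero_of_notMem he := Prod.ext (hθ.eq_zero_of_notMem he) (hη.eq_zero_of_notMem he)
  boundary_eq := funext fun x => Prod.ext
    ((map_finsum (AddMonoidHom.fst M N) (Set.toFinite _)).trans (congrFun hθ.boundary_eq x))
    ((map_finsum (AddMonoidHom.snd M N) (Set.toFinite _)).trans (congrFun hη.boundary_eq x))

lemma boundary_indicator_one (E : Set (Sym2 V)) (x : V) :
    boundary (E.indicator (1 : Sym2 V → ZMod 2)) x = ({y | s(x, y) ∈ E}.ncard : ZMod 2) := by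
  rw [← finsum_one, Nat.cast_finsum_mem (Set.toFinite _), finsum_mem_def, boundary]
  exact finsum_congr fun y => by simp only [Nat.cast_one]; rfl

lemma IsEvenSubgraph.isFlowOn_indicator {K : G.Subgraph} (hK : IsEvenSubgraph K) :
    IsFlowOn K.edgeSet (K.edgeSet.indicator (1 : Sym2 V → ZMod 2)) where
  eq_zero_of_notMem he := Set.indicator_of_notMem he _
  boundary_eq := funext fun x => by
    rw [boundary_indicator_one]
    exact (ZMod.natCast_eq_zero_iff_even).2 (hK x)

lemma isChainOn_indicator_singleton {a b : V} (hab : a ≠ b) :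
    IsChainOn {s(a, b)} (Set.indicator {s(a, b)} 1) (endpoints a b) where
  eq_zero_of_notMem he := Set.indicator_of_notMem he _
  boundary_eq := funext fun x => by
    have hnbr : {y | s(x, y) ∈ ({s(a, b)} : Set (Sym2 V))} =
        {y | x = a ∧ y = b ∨ x = b ∧ y = a} := by
      simp only [Set.mem_singleton_iff, Sym2.eq_iff]
    rw [boundary_indicator_one, hnbr, endpoints, Pi.add_apply]
    rcases eq_or_ne x a with rfl | hxa
    · simp [hab]
    rcases eq_or_ne x b with rfl | hxb
    · simp [hxa]
    · simp [hxa, hxb]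

lemma exists_isChainOn_of_toSubgraph_le {S : G.Subgraph} {a b : V} (p : G.Walk a b)
    (hp : p.toSubgraph ≤ S) : ∃ q, IsChainOn S.edgeSet q (endpoints a b) := by
  induction p with
  | nil =>
    rw [endpoints_self]
    exact ⟨0, fun _ => rfl, funext fun _ => finsum_zero⟩
  | @cons a b c hab p ih =>
    rw [Walk.toSubgraph, sup_le_iff, subgraphOfAdj_le_iff] at hp
    obtain ⟨q, hq⟩ := ih hp.2
    have hedge : IsChainOn S.edgeSet _ (endpoints a b) :=
      (isChainOn_indicator_singleton hab.ne).mono (Set.singleton_subset_iff.2 hp.1)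
    exact ⟨_, endpoints_add_endpoints a b c ▸ hedge.add hq⟩

lemma exists_isChainOn_of_connected {S : G.Subgraph} (hS : S.Connected) {a b : V}
    (ha : a ∈ S.verts) (hb : b ∈ S.verts) : ∃ q, IsChainOn S.edgeSet q (endpoints a b) := by
  obtain ⟨p, hp⟩ := (S.connected_iff_forall_exists_walk_subgraph.1 hS).2 ha hb
  exact exists_isChainOn_of_toSubgraph_le p hp

end Chain

section Frame

variable {V M : Type*} {G : SimpleGraph V} {S P : G.Subgraph} {E E' : Set (Sym2 V)}
  {c c' : Sym2 V → ZMod 2}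

/-- Every prescription `f` of forbidden values on the zeros of `c` in `E` is avoided by some
`M`-valued flow on `E`. The values to be avoided are arbitrary, rather than `0`, to let the property
pass from `E` to a larger edge set. -/
def IsCompletable (M : Type*) [AddCommMonoid M] (E : Set (Sym2 V)) (c : Sym2 V → ZMod 2) : Prop :=
  ∀ f : Sym2 V → M, ∃ ψ, IsFlowOn E ψ ∧ ∀ e ∈ E, c e = 0 → ψ e ≠ f e

/-- A connected subgraph `S` with a binary flow `c` on it whose zeros can be taken care of by an
`M`-valued flow on `S`. -/
structure IsFrame (M : Type*) [AddCommMonoid M] (S : G.Subgraph) (c : Sym2 V → ZMod 2) : Prop where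
  connected : S.Connected
  isFlowOn : IsFlowOn S.edgeSet c
  isCompletable : IsCompletable M S.edgeSet c

lemma notMem_edgeSet {a b : V} (hb : b ∉ S.verts) : s(a, b) ∉ S.edgeSet := fun h =>
  hb (Subgraph.mem_edgeSet.1 h).snd_mem

lemma disjoint_edgeSet (h : Disjoint S.verts P.verts) : Disjoint S.edgeSet P.edgeSet := by
  refine Set.disjoint_left.2 fun e => e.ind fun a b hS hP => ?_
  exact Set.disjoint_left.1 h (S.edge_vert hS) (P.edge_vert hP)

variable [Finite V]

lemma IsFrame.of_connected_even [AddCommMonoid M] (hP : P.Connected) (hPeven : IsEvenSubgraph P) :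
    IsFrame M P (P.edgeSet.indicator 1) where
  connected := hP
  isFlowOn := hPeven.isFlowOn_indicator
  isCompletable _ := ⟨0, ⟨fun _ => rfl, funext fun _ => finsum_zero⟩, fun e he h0 => by
    simp [he] at h0⟩

lemma exists_isFlowOn_sup_subgraphOfAdj {a b : V} (hS : S.Connected) (ha : a ∈ S.verts)
    (hb : b ∈ S.verts) (hab : G.Adj a b) (hnew : ¬ S.Adj a b) :
    ∃ Q : Sym2 V → ZMod 2, IsFlowOn (S ⊔ G.subgraphOfAdj hab).edgeSet Q ∧ Q s(a, b) = 1 := by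
  obtain ⟨q, hq⟩ := exists_isChainOn_of_connected hS hb ha
  have hedge := isChainOn_indicator_singleton hab.ne
  refine ⟨_, endpoints_self a ▸ endpoints_add_endpoints a b a ▸
    (hedge.mono ?_).add (hq.mono ?_), ?_⟩
  · simp [hq.eq_zero_of_notMem (e := s(a, b)) hnew]
  · simp
  · simp

lemma exists_isFlowOn_sup_sup {a₁ a₂ y₁ y₂ : V} (hS : S.Connected) (hP : P.Connected)
    (hdisj : Disjoint S.verts P.verts) (ha₁ : a₁ ∈ S.verts) (ha₂ : a₂ ∈ S.verts)
    (hy₁ : y₁ ∈ P.verts) (hy₂ : y₂ ∈ P.verts) (h₁ : G.Adj a₁ y₁) (h₂ : G.Adj a₂ y₂)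
    (hne : s(a₁, y₁) ≠ s(a₂, y₂)) :
    ∃ Q : Sym2 V → ZMod 2,
      IsFlowOn (S ⊔ G.subgraphOfAdj h₁ ⊔ P ⊔ G.subgraphOfAdj h₂).edgeSet Q ∧
        Q s(a₁, y₁) = 1 ∧ Q s(a₂, y₂) = 1 := by
  set T := S ⊔ G.subgraphOfAdj h₁ ⊔ P ⊔ G.subgraphOfAdj h₂ with hT
  have hmemS : ∀ {a y}, y ∈ P.verts → s(a, y) ∉ S.edgeSet := fun hy =>
    notMem_edgeSet (Set.disjoint_right.1 hdisj hy)
  have hmemP : ∀ {a y}, a ∈ S.verts → s(a, y) ∉ P.edgeSet := fun ha => by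
    rw [Sym2.eq_swap]
    exact notMem_edgeSet (Set.disjoint_left.1 hdisj ha)
  obtain ⟨qS, hqS⟩ := exists_isChainOn_of_connected hS ha₂ ha₁
  obtain ⟨qP, hqP⟩ := exists_isChainOn_of_connected hP hy₁ hy₂
  have hST : IsChainOn T.edgeSet qS _ := hqS.mono (Subgraph.edgeSet_mono (by simp [hT, sup_assoc]))
  have hPT : IsChainOn T.edgeSet qP _ := hqP.mono
    (Subgraph.edgeSet_mono (le_sup_of_le_left le_sup_right))
  have h₁T : IsChainOn T.edgeSet _ (endpoints a₁ y₁) :=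
    (isChainOn_indicator_singleton h₁.ne).mono (by simp [hT])
  have h₂T : IsChainOn T.edgeSet _ (endpoints y₂ a₂) :=
    (isChainOn_indicator_singleton h₂.ne.symm).mono (by simp [hT])
  have hQ := ((h₁T.add hPT).add h₂T).add hST
  simp only [endpoints_add_endpoints, endpoints_self] at hQ
  refine ⟨_, hQ, ?_, ?_⟩
  · simp [hqS.eq_zero_of_notMem (hmemS hy₁), hqP.eq_zero_of_notMem (hmemP ha₁), hne,
      Sym2.eq_swap (a := y₂)]
  · simp [hqS.eq_zero_of_notMem (hmemS hy₂), hqP.eq_zero_of_notMem (hmemP ha₂), hne.symm,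
      Sym2.eq_swap (a := y₂)]

variable [AddCommGroup M] [Module (ZMod 2) M]

/-- Adding a multiple `Q • γ` of the binary flow `Q` controls the values at `e₁` and `e₂`, and only
shifts the values to be avoided on the zeros of `c`. -/
lemma IsCompletable.of_isFlowOn (hM : 3 ≤ ENat.card M) (hc : IsCompletable M E c)
    (hEE' : E ⊆ E') {Q : Sym2 V → ZMod 2} (hQ : IsFlowOn E' Q) {e₁ e₂ : Sym2 V} (he₁ : e₁ ∉ E)
    (he₂ : e₂ ∉ E) (hQ₁ : Q e₁ = 1) (hQ₂ : Q e₂ = 1)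
    (hc' : ∀ e ∈ E', c' e = 0 → e ∈ E ∧ c e = 0 ∨ e = e₁ ∨ e = e₂) : IsCompletable M E' c' := by
  intro f
  obtain ⟨γ, hγ₁, hγ₂⟩ := ENat.exists_ne_ne_of_three_le hM (f e₁) (f e₂)
  obtain ⟨ψ, hψ, hne⟩ := hc fun e => f e - Q e • γ
  refine ⟨_, IsFlowOn.add (hψ.mono hEE') (hQ.smul_const γ), fun e he h0 => ?_⟩
  obtain ⟨heE, hce⟩ | rfl | rfl := hc' e he h0
  · exact fun h => hne e heE hce (eq_sub_of_add_eq h)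
  · simpa [hψ.eq_zero_of_notMem he₁, hQ₁] using hγ₁
  · simpa [hψ.eq_zero_of_notMem he₂, hQ₂] using hγ₂

namespace IsFrame

lemma sup_subgraphOfAdj (hM : 3 ≤ ENat.card M) (hS : IsFrame M S c) {a b : V} (ha : a ∈ S.verts)
    (hb : b ∈ S.verts) (hab : G.Adj a b) (hnew : ¬ S.Adj a b) :
    IsFrame M (S ⊔ G.subgraphOfAdj hab) c where
  connected := Subgraph.connected_sup hS.connected.preconnected
    (Subgraph.subgraphOfAdj_connected hab).preconnected ⟨a, ha, by simp⟩
  isFlowOn := hS.isFlowOn.mono (Subgraph.edgeSet_mono le_sup_left)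
  isCompletable := by
    obtain ⟨Q, hQ, hQ₁⟩ := exists_isFlowOn_sup_subgraphOfAdj hS.connected ha hb hab hnew
    refine hS.isCompletable.of_isFlowOn hM (Subgraph.edgeSet_mono le_sup_left) hQ hnew hnew hQ₁ hQ₁
      fun e he h0 => ?_
    rw [Subgraph.edgeSet_sup, edgeSet_subgraphOfAdj] at he
    exact he.imp (⟨·, h0⟩) .inl

lemma sup_sup (hM : 3 ≤ ENat.card M) (hS : IsFrame M S c) (hP : P.Connected)
    (hPeven : IsEvenSubgraph P) (hdisj : Disjoint S.verts P.verts) {a₁ a₂ y₁ y₂ : V}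
    (ha₁ : a₁ ∈ S.verts) (ha₂ : a₂ ∈ S.verts) (hy₁ : y₁ ∈ P.verts) (hy₂ : y₂ ∈ P.verts)
    (h₁ : G.Adj a₁ y₁) (h₂ : G.Adj a₂ y₂) (hne : s(a₁, y₁) ≠ s(a₂, y₂)) :
    IsFrame M (S ⊔ G.subgraphOfAdj h₁ ⊔ P ⊔ G.subgraphOfAdj h₂)
      (c + P.edgeSet.indicator 1) where
  connected := by
    have hS₁ := Subgraph.connected_sup hS.connected.preconnected
      (Subgraph.subgraphOfAdj_connected h₁).preconnected ⟨a₁, ha₁, by simp⟩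
    have hS₁P := Subgraph.connected_sup hS₁.preconnected hP.preconnected ⟨y₁, by simp, hy₁⟩
    exact Subgraph.connected_sup hS₁P.preconnected
      (Subgraph.subgraphOfAdj_connected h₂).preconnected ⟨a₂, by simp [ha₂], by simp⟩
  isFlowOn := IsFlowOn.add
    (hS.isFlowOn.mono (Subgraph.edgeSet_mono (by simp [sup_assoc])))
    (hPeven.isFlowOn_indicator.mono (Subgraph.edgeSet_mono (le_sup_of_le_left le_sup_right)))
  isCompletable := by
    obtain ⟨Q, hQ, hQ₁, hQ₂⟩ :=
      exists_isFlowOn_sup_sup hS.connected hP hdisj ha₁ ha₂ hy₁ hy₂ h₁ h₂ hne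
    have hnotMem := Set.disjoint_right.1 hdisj
    refine hS.isCompletable.of_isFlowOn hM (Subgraph.edgeSet_mono (by simp [sup_assoc])) hQ
      (notMem_edgeSet (hnotMem hy₁)) (notMem_edgeSet (hnotMem hy₂)) hQ₁ hQ₂ fun e he h0 => ?_
    simp only [Subgraph.edgeSet_sup, edgeSet_subgraphOfAdj] at he
    obtain ((heS | he₁) | heP) | he₂ := he
    · have heP := Set.disjoint_left.1 (disjoint_edgeSet hdisj) heS
      exact .inl ⟨heS, by simpa [heP] using h0⟩
    · exact .inr (.inl he₁)
    · have heS := Set.disjoint_right.1 (disjoint_edgeSet hdisj) heP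
      simp [heP, hS.isFlowOn.eq_zero_of_notMem heS] at h0
    · exact .inr (.inr he₂)

end IsFrame

end Frame

section Growth

variable {V M : Type*} [Finite V] {G : SimpleGraph V}

/-- Such a `Z` is a leaf of the bridge tree of `H` restricted to `W`; it is found as a minimal
nonempty subset of `W` sending at most one edge to the rest of `W`. -/
lemma exists_subset_isTwoLinked_induce (H : G.Subgraph) {W : Set V} (hW : W.Nonempty) :
    ∃ Z ⊆ W, Z.Nonempty ∧ edgeCount H Z (W \ Z) ≤ 1 ∧
      ∀ x ∈ Z, ∀ y ∈ Z, IsTwoLinked (H.induce Z) x y := by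
  obtain ⟨Z, hZW, ⟨hZ, hZ_le⟩, hmin⟩ := exists_minimal_le_of_wellFoundedLT
    (fun Z : Set V => Z.Nonempty ∧ edgeCount H Z (W \ Z) ≤ 1) W ⟨hW, by simp [edgeCount]⟩
  have htwo : ∀ B ⊆ Z, B.Nonempty → (Z \ B).Nonempty →
      2 ≤ edgeCount H B (Z \ B) + edgeCount H B (W \ Z) := fun B hBZ hB ⟨z, hzZ, hzB⟩ => by
    by_contra! hlt
    refine hzB (hmin ⟨hB, ?_⟩ hBZ hzZ)
    rw [← edgeCount_union_right H B (Set.disjoint_left.2 fun _ h h' => h'.2 h.1)] at hlt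
    exact (edgeCount_le_edgeCount fun a ha b hb hab => ⟨ha, by grind, hab⟩).trans
      (Nat.le_of_lt_succ hlt)
  refine ⟨Z, hZW, hZ, hZ_le, fun x hx y hy A hxA hyA => ?_⟩
  have hA := htwo (A ∩ Z) Set.inter_subset_right ⟨x, hxA, hx⟩ ⟨y, hy, fun h => hyA h.1⟩
  have hAc := htwo (Aᶜ ∩ Z) Set.inter_subset_right ⟨y, hyA, hy⟩ ⟨x, hx, fun h => h.1 hxA⟩
  have hsdiff : Z \ (A ∩ Z) = Aᶜ ∩ Z := by grind
  have hsdiff' : Z \ (Aᶜ ∩ Z) = A ∩ Z := by grind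
  have hsum := edgeCount_union_left H (W \ Z) (A := A ∩ Z) (B := Aᶜ ∩ Z)
    (Set.disjoint_left.2 fun _ h h' => h'.1 h.1)
  rw [← Set.union_inter_distrib_right, Set.union_compl_self, Set.univ_inter] at hsum
  rw [hsdiff] at hA
  rw [hsdiff', edgeCount_comm H (Aᶜ ∩ Z) (A ∩ Z)] at hAc
  rw [edgeCount_induce]
  lia

lemma EdgeConnGe.isTwoLinked_induce_compl_singleton (hG : EdgeConnGe G 3) {u v w : V}
    (hv : (G.neighborSet v).ncard = 3) (huv : u ≠ v) (hwv : w ≠ v) :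
    IsTwoLinked ((⊤ : G.Subgraph).induce {v}ᶜ) u w := fun A hu hw => by
  have hcut : ∀ {B : Set V}, (B ∩ {v}ᶜ).Nonempty →
      3 ≤ edgeCount (⊤ : G.Subgraph) (B ∩ {v}ᶜ) (Bᶜ ∩ {v}ᶜ) +
        edgeCount (⊤ : G.Subgraph) {v} (B ∩ {v}ᶜ) := fun {B} hB => by
    rw [edgeCount_comm _ {v}, ← edgeCount_union_right]
    · refine (hG.le_edgeCount hB ⟨v, by simp⟩).trans (edgeCount_le_edgeCount ?_)
      exact fun a ha b hb hab => ⟨ha, by grind, hab⟩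
    · exact Set.disjoint_left.2 fun _ h => h.2
  have hA := hcut (B := A) ⟨u, hu, huv⟩
  have hAc := hcut (B := Aᶜ) ⟨w, hw, hwv⟩
  have hdeg : edgeCount (⊤ : G.Subgraph) {v} (A ∩ {v}ᶜ) +
      edgeCount (⊤ : G.Subgraph) {v} (Aᶜ ∩ {v}ᶜ) ≤ 3 := by
    rw [← hv, ← Subgraph.neighborSet_top, ← edgeCount_singleton_univ, ← edgeCount_union_right]
    · exact edgeCount_le_edgeCount fun a ha b _ hab => ⟨ha, trivial, hab⟩
    · exact Set.disjoint_left.2 fun _ h h' => h'.1 h.1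
  rw [compl_compl, edgeCount_comm _ (Aᶜ ∩ {v}ᶜ) (A ∩ {v}ᶜ)] at hAc
  rw [edgeCount_induce]
  lia

lemma EdgeConnGe.exists_isTwoLinked_induce (hG : EdgeConnGe G 3) {X : Set V} (hX : X.Nonempty)
    (hXc : Xᶜ.Nonempty) :
    ∃ Z ⊆ Xᶜ, 2 ≤ edgeCount (⊤ : G.Subgraph) Z X ∧
      ∀ x ∈ Z, ∀ y ∈ Z, IsTwoLinked ((⊤ : G.Subgraph).induce Z) x y := by
  obtain ⟨Z, hZX, hZ, hle, hlinked⟩ := exists_subset_isTwoLinked_induce (⊤ : G.Subgraph) hXc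
  obtain ⟨x, hx⟩ := hX
  refine ⟨Z, hZX, ?_, hlinked⟩
  have hcut := hG.le_edgeCount hZ ⟨x, fun hxZ => hZX hxZ hx⟩
  have hZc : Zᶜ = X ∪ Xᶜ \ Z := by grind
  rw [hZc, edgeCount_union_right _ _ (Set.disjoint_left.2 fun _ h h' => h'.1 h)] at hcut
  lia

lemma EdgeConnGe.exists_connected_even (hG : EdgeConnGe G 3) {X : Set V} (hX : X.Nonempty)
    (hXc : Xᶜ.Nonempty) :
    ∃ P : G.Subgraph, P.Connected ∧ IsEvenSubgraph P ∧ Disjoint X P.verts ∧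
      ∃ a₁ ∈ X, ∃ a₂ ∈ X, ∃ y₁ ∈ P.verts, ∃ y₂ ∈ P.verts,
        G.Adj a₁ y₁ ∧ G.Adj a₂ y₂ ∧ s(a₁, y₁) ≠ s(a₂, y₂) := by
  obtain ⟨Z, hZX, htwo, hlinked⟩ := hG.exists_isTwoLinked_induce hX hXc
  obtain ⟨⟨y₁, a₁⟩, ⟨y₂, a₂⟩, ⟨hy₁, ha₁, h₁⟩, ⟨hy₂, ha₂, h₂⟩, hne⟩ :=
    (Set.one_lt_ncard_iff (Set.toFinite _)).1 htwo
  have hedge_ne : s(a₁, y₁) ≠ s(a₂, y₂) := by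
    rw [Ne, Sym2.eq_iff]
    rintro (⟨rfl, rfl⟩ | ⟨rfl, rfl⟩)
    · exact hne rfl
    · exact hZX hy₂ ha₁
  by_cases hy : y₁ = y₂
  · refine ⟨G.singletonSubgraph y₁, Subgraph.singletonSubgraph_connected,
      isEvenSubgraph_singletonSubgraph y₁, ?_, a₁, ha₁, a₂, ha₂, y₁, rfl, y₂, hy.symm,
      h₁.symm, h₂.symm, hedge_ne⟩
    simpa using hZX hy₁
  · obtain ⟨P, hPZ, hP, hPeven, ⟨b₁, hb₁⟩, ⟨b₂, hb₂⟩⟩ :=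
      (hlinked y₁ hy₁ y₂ hy₂).exists_connected_even hy
    exact ⟨P, hP, hPeven, Set.disjoint_right.2 fun x hx => hZX (hPZ.1 hx), a₁, ha₁, a₂, ha₂, y₁,
      hb₁.fst_mem, y₂, hb₂.fst_mem, h₁.symm, h₂.symm, hedge_ne⟩

variable [AddCommGroup M] [Module (ZMod 2) M] {S : G.Subgraph} {c : Sym2 V → ZMod 2}

lemma IsFrame.exists_lt (hM : 3 ≤ ENat.card M) (hG : EdgeConnGe G 3) (hS : IsFrame M S c)
    (hS_ne : S ≠ ⊤) :
    ∃ S' c', S < S' ∧ IsFrame M S' c' ∧ ∀ x ∈ S.verts, ∀ y, c' s(x, y) = c s(x, y) := by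
  by_cases hind : ∀ a ∈ S.verts, ∀ b ∈ S.verts, G.Adj a b → S.Adj a b
  · have hXc : S.vertsᶜ.Nonempty := by
      rw [Set.nonempty_compl]
      refine fun huniv => hS_ne (top_le_iff.1 ⟨huniv.ge, fun a b hab => ?_⟩)
      exact hind a (huniv ▸ trivial) b (huniv ▸ trivial) hab
    obtain ⟨P, hP, hPeven, hdisj, a₁, ha₁, a₂, ha₂, y₁, hy₁, y₂, hy₂, h₁, h₂, hne⟩ :=
      hG.exists_connected_even hS.connected.nonempty hXc
    refine ⟨_, _, ?_, hS.sup_sup hM hP hPeven hdisj ha₁ ha₂ hy₁ hy₂ h₁ h₂ hne, fun x hx y => ?_⟩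
    · refine lt_of_le_of_ne (by simp [sup_assoc]) fun h => Set.disjoint_right.1 hdisj hy₁ ?_
      rw [h]
      simp
    · have hxP : s(x, y) ∉ P.edgeSet :=
        Sym2.eq_swap ▸ notMem_edgeSet (Set.disjoint_left.1 hdisj hx)
      simp [hxP]
  · push Not at hind
    obtain ⟨a, ha, b, hb, hab, hnew⟩ := hind
    refine ⟨_, c, ?_, hS.sup_subgraphOfAdj hM ha hb hab hnew, fun _ _ _ => rfl⟩
    exact left_lt_sup.2 fun hle => hnew (hle.2 (by simp))

lemma IsFrame.exists_top (hM : 3 ≤ ENat.card M) (hG : EdgeConnGe G 3) (hS : IsFrame M S c) :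
    ∃ c', IsFrame M (⊤ : G.Subgraph) c' ∧ ∀ x ∈ S.verts, ∀ y, c' s(x, y) = c s(x, y) := by
  obtain ⟨T, hST, ⟨c', hT, hc'⟩, hmax⟩ := exists_maximal_ge_of_wellFoundedGT
    (fun T : G.Subgraph => ∃ c', IsFrame M T c' ∧ ∀ x ∈ S.verts, ∀ y, c' s(x, y) = c s(x, y)) S
    ⟨c, hS, fun _ _ _ => rfl⟩
  rcases eq_or_ne T ⊤ with rfl | hT_ne
  · exact ⟨c', hT, hc'⟩
  obtain ⟨T', c'', hTT', hT', hc''⟩ := hT.exists_lt hM hG hT_ne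
  refine absurd (hmax ⟨c'', hT', fun x hx y => ?_⟩ hTT'.le) hTT'.not_ge
  rw [hc'' x (hST.1 hx), hc' x hx]

lemma EdgeConnGe.exists_isFrame_top (hM : 3 ≤ ENat.card M) (hG : EdgeConnGe G 3) {u v w : V}
    (hv : (G.neighborSet v).ncard = 3) (huv : G.Adj u v) (hvw : G.Adj v w) (huw : u ≠ w) :
    ∃ c, IsFrame M (⊤ : G.Subgraph) c ∧ (∀ y, c s(v, y) = 0) ∧ (∃ y, c s(u, y) ≠ 0) ∧
      ∃ y, c s(w, y) ≠ 0 := by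
  obtain ⟨P, hPv, hP, hPeven, ⟨a, ha⟩, ⟨b, hb⟩⟩ :=
    (hG.isTwoLinked_induce_compl_singleton hv huv.ne hvw.ne').exists_connected_even huw
  have hvP : v ∉ P.verts := fun h => hPv.1 h rfl
  have hS := (IsFrame.of_connected_even (M := M) hP hPeven).sup_sup hM
    Subgraph.singletonSubgraph_connected (isEvenSubgraph_singletonSubgraph v)
    (by simpa using hvP) ha.fst_mem hb.fst_mem rfl rfl huv hvw.symm (by simp [huw, huv.ne])
  rw [edgeSet_singletonSubgraph, Set.indicator_empty', add_zero] at hS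
  obtain ⟨c, hc, hceq⟩ := hS.exists_top hM hG
  refine ⟨c, hc, fun y => ?_, ⟨a, ?_⟩, b, ?_⟩
  · rw [hceq v (by simp), Sym2.eq_swap, Set.indicator_of_notMem (notMem_edgeSet hvP)]
  · rw [hceq u (by simp), Set.indicator_of_mem (Subgraph.mem_edgeSet.2 ha)]
    exact one_ne_zero
  · rw [hceq w (by simp), Set.indicator_of_mem (Subgraph.mem_edgeSet.2 hb)]
    exact one_ne_zero

end Growth

section Rich

variable {V C M : Type*} {G : SimpleGraph V} {v a b : V}

lemma incidenceSet_eq_image_neighborSet (G : SimpleGraph V) (v : V) :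
    G.incidenceSet v = (s(v, ·)) '' G.neighborSet v := by
  refine Set.Subset.antisymm ?_ (Set.image_subset_iff.2 fun y hy => ?_)
  · rintro _ ⟨he, y, rfl⟩
    exact ⟨y, he, rfl⟩
  · exact G.mk'_mem_incidenceSet_left_iff.2 hy

lemma finsum_mem_incidenceSet [AddCommMonoid M] (G : SimpleGraph V) (v : V) (θ : Sym2 V → M) :
    ∑ᶠ e ∈ G.incidenceSet v, θ e = ∑ᶠ y ∈ G.neighborSet v, θ s(v, y) := by
  rw [incidenceSet_eq_image_neighborSet,
    finsum_mem_image fun _ _ _ _ h => Sym2.congr_right.1 h]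

lemma IsFlowOn.finsum_mem_incidenceSet_eq_zero [AddCommMonoid M] {θ : Sym2 V → M}
    (hθ : IsFlowOn G.edgeSet θ) (v : V) : ∑ᶠ e ∈ G.incidenceSet v, θ e = 0 := by
  have hsupp : (Function.support fun y => θ s(v, y)) ⊆ G.neighborSet v := fun y hy =>
    by_contra fun h => hy (hθ.eq_zero_of_notMem h)
  rw [finsum_mem_incidenceSet, finsum_mem_def, Set.indicator_eq_self.2 hsupp]
  exact congrFun hθ.boundary_eq v

lemma colorSet_eq_image_neighborSet (G : SimpleGraph V) (θ : Sym2 V → C) (v : V) :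
    colorSet G θ v = (fun y => θ s(v, y)) '' G.neighborSet v := by
  rw [colorSet, incidenceSet_eq_image_neighborSet, Set.image_image]

lemma IsRichAt.symm {θ : Sym2 V → C} (h : IsRichAt G θ a b) : IsRichAt G θ b a := by
  rwa [IsRichAt, Set.union_comm]

lemma IsNowhereZeroFlow.exists_colorSet_eq [AddCommMonoid M] {θ : Sym2 V → M}
    (hθ : IsNowhereZeroFlow G θ) (hv : (G.neighborSet v).ncard = 3) (hva : G.Adj v a) :
    ∃ β γ, β ≠ 0 ∧ γ ≠ 0 ∧ θ s(v, a) + (β + γ) = 0 ∧ colorSet G θ v = {θ s(v, a), β, γ} := by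
  have haN : a ∈ G.neighborSet v := hva
  obtain ⟨b, d, hbd, hdiff⟩ : ∃ b d, b ≠ d ∧ G.neighborSet v \ {a} = {b, d} := by
    rw [← Set.ncard_eq_two, Set.ncard_sdiff_singleton_of_mem haN, hv]
  have hnbr : G.neighborSet v = {a, b, d} := by rw [← hdiff, Set.insert_sdiff_self_of_mem haN]
  have hvb : G.Adj v b := hnbr.ge (by simp)
  have hvd : G.Adj v d := hnbr.ge (by simp)
  have ha : a ∉ ({b, d} : Set V) := hdiff ▸ fun h => h.2 rfl
  refine ⟨θ s(v, b), θ s(v, d), hθ.1 _ hvb, hθ.1 _ hvd, ?_, ?_⟩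
  · have hsum := hθ.2 v
    rwa [finsum_mem_incidenceSet, hnbr, finsum_mem_insert _ ha (Set.toFinite _),
      finsum_mem_pair hbd] at hsum
  · rw [colorSet_eq_image_neighborSet, hnbr, Set.image_insert_eq, Set.image_pair]

variable [AddCommGroup M] [Module (ZMod 2) M] {θ : Sym2 V → M}

lemma IsNowhereZeroFlow.ncard_colorSet (hθ : IsNowhereZeroFlow G θ)
    (hv : (G.neighborSet v).ncard = 3) (hva : G.Adj v a) : (colorSet G θ v).ncard = 3 := by
  obtain ⟨β, γ, hβ, hγ, hsum, hcolor⟩ := hθ.exists_colorSet_eq hv hva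
  have hα : θ s(v, a) = β + γ := by rwa [← ZModModule.sub_eq_add, sub_eq_zero] at hsum
  have hβγ : β ≠ γ := by
    rintro rfl
    exact hθ.1 _ hva (hα.trans (ZModModule.add_self β))
  rw [hcolor, hα]
  exact Set.ncard_eq_three.2 ⟨_, _, _, by simpa, by simpa, hβγ, rfl⟩

lemma IsNowhereZeroFlow.isRichAt (hθ : IsNowhereZeroFlow G θ) (ha : (G.neighborSet a).ncard = 3)
    (hb : (G.neighborSet b).ncard = 3) (hab : G.Adj a b) (φ : M →+ ZMod 2)
    (hφb : ∀ m ∈ colorSet G θ b, φ m = 0) (hφa : ∃ m ∈ colorSet G θ a, φ m ≠ 0) :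
    IsRichAt G θ a b := by
  have hαb : θ s(a, b) ∈ colorSet G θ b := ⟨_, G.mk'_mem_incidenceSet_right_iff.2 hab, rfl⟩
  have hα := hφb _ hαb
  have hinter : colorSet G θ a ∩ colorSet G θ b = {θ s(a, b)} := by
    obtain ⟨β, γ, -, -, hsum, hcolor⟩ := hθ.exists_colorSet_eq ha hab
    have hβγ : φ β = φ γ := by
      have hsum := congrArg φ hsum
      rwa [map_add, map_add, hα, zero_add, map_zero, ← ZModModule.sub_eq_add, sub_eq_zero] at hsum
    rw [hcolor] at hφa ⊢
    have hβ : φ β ≠ 0 := by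
      obtain ⟨m, rfl | rfl | rfl, hm⟩ := hφa
      · exact absurd hα hm
      · exact hm
      · exact hβγ ▸ hm
    refine Set.Subset.antisymm ?_ (by simp [hαb])
    rintro m ⟨rfl | rfl | rfl, hm⟩
    · rfl
    · exact absurd (hφb _ hm) hβ
    · exact absurd (hφb _ hm) (hβγ ▸ hβ)
  have ha_card := hθ.ncard_colorSet ha hab
  have hb_card := hθ.ncard_colorSet hb hab.symm
  have hcount := Set.ncard_union_add_ncard_inter (colorSet G θ a) (colorSet G θ b)
    (Set.finite_of_ncard_ne_zero (by lia)) (Set.finite_of_ncard_ne_zero (by lia))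
  rw [hinter, Set.ncard_singleton, ha_card, hb_card] at hcount
  exact Nat.succ_injective hcount

end Rich

theorem stmt_11_general {V M : Type*} [Finite V] [AddCommGroup M] [Module (ZMod 2) M]
    (hM : 3 ≤ ENat.card M) (G : SimpleGraph V) (hconn : EdgeConnGe G 3) (u v w : V)
    (hu : (G.neighborSet u).ncard = 3) (hv : (G.neighborSet v).ncard = 3)
    (hw : (G.neighborSet w).ncard = 3) (huv : G.Adj u v) (hvw : G.Adj v w) (huw : u ≠ w) :
    ∃ θ : Sym2 V → ZMod 2 × M,
      IsNowhereZeroFlow G θ ∧ IsRichAt G θ u v ∧ IsRichAt G θ v w := by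
  obtain ⟨c, hc, hcv, ⟨a, ha⟩, ⟨b, hb⟩⟩ := hconn.exists_isFrame_top hM hv huv hvw huw
  obtain ⟨ψ, hψ, hψ_ne⟩ := hc.isCompletable 0
  have hθ : IsNowhereZeroFlow G fun e => (c e, ψ e) := by
    refine ⟨fun e he h0 => ?_, (hc.isFlowOn.prodMk hψ).finsum_mem_incidenceSet_eq_zero⟩
    rw [Prod.mk_eq_zero] at h0
    exact hψ_ne e he h0.1 h0.2
  have hcolor_ne : ∀ {x y}, c s(x, y) ≠ 0 →
      ∃ m ∈ colorSet G (fun e => (c e, ψ e)) x, AddMonoidHom.fst (ZMod 2) M m ≠ 0 := by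
    refine fun {x y} hxy => ⟨_, ⟨s(x, y), ?_, rfl⟩, hxy⟩
    exact G.mk'_mem_incidenceSet_left_iff.2
      (by_contra fun h => hxy (hc.isFlowOn.eq_zero_of_notMem h))
  have hcolor_v : ∀ m ∈ colorSet G (fun e => (c e, ψ e)) v, AddMonoidHom.fst (ZMod 2) M m = 0 := by
    rw [colorSet_eq_image_neighborSet, Set.forall_mem_image]
    exact fun y _ => hcv y
  exact ⟨_, hθ, hθ.isRichAt hu hv huv _ hcolor_v (hcolor_ne ha),
    (hθ.isRichAt hw hv hvw.symm _ hcolor_v (hcolor_ne hb)).symm⟩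

theorem stmt_11 {V : Type*} [Fintype V] (G : SimpleGraph V)
    (hG : IsCubic G) (hconn : EdgeConnGe G 3)
    (u v w : V) (huv : G.Adj u v) (hvw : G.Adj v w) (hne : s(u, v) ≠ s(v, w)) :
    ∃ θ : Sym2 V → ZMod 2 × ZMod 2 × ZMod 2,
      IsNowhereZeroFlow G θ ∧ IsRichAt G θ u v ∧ IsRichAt G θ v w :=
  stmt_11_general (by norm_num [ENat.card_eq_coe_fintype_card]) G hconn u v w (hG u) (hG v) (hG w)
    huv hvw (by rintro rfl; exact hne Sym2.eq_swap)
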